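/- arXiv:2401.13230 — 4 statements merged into one kernel-verified Lean document; each statement's English description precedes it below -/
import Mathlib

section
/- Let R be a commutative ring, g ≥ 1 an integer, let d₁,…,d_g : R → R be pairwise commuting derivations, and let c, u₁,…,u_g ∈ R be elements with d_σ(c) = 0 and d_σ(u_τ) = 0 for all σ, τ. On the polynomial ring R[X₁,…,X_g] define for each σ the additive operator D_σ by D_σ(f) = d_σ^*(f) + c·u_σ·X_σ·f − c·X_σ²·(∂f/∂X_σ), where d_σ^* applies d_σ to each coefficient of f (equivalently, D_σ(a·X^I) = d_σ(a)·X^I + c·(u_σ − I_σ)·a·X_σ·X^I for a ∈ R and a multi-index I with σ-entry I_σ). Then D_σ ∘ D_τ = D_τ ∘ D_σ for all σ, τ. -/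
open MvPolynomial

/-- Applying a map `d : R → R` to each coefficient of a multivariate polynomial. -/
noncomputable def coeffwise {R : Type*} [CommRing R] {g : ℕ} (d : R → R)
    (f : MvPolynomial (Fin g) R) : MvPolynomial (Fin g) R :=
  ∑ m ∈ f.support, monomial m (d (coeff m f))

/-- The `q`-expansion model of the partial Gauss–Manin connection:
`D_σ(f) = d_σ^*(f) + c·u_σ·X_σ·f − c·X_σ²·(∂f/∂X_σ)`. -/
noncomputable def GMop {R : Type*} [CommRing R] {g : ℕ} (d : Fin g → Derivation ℤ R R)
    (c : R) (u : Fin g → R) (σ : Fin g) (f : MvPolynomial (Fin g) R) :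
    MvPolynomial (Fin g) R :=
  coeffwise (d σ) f + C c * C (u σ) * X σ * f - C c * X σ ^ 2 * pderiv σ f

theorem cw_coeff {R : Type*} [CommRing R] {g : ℕ} (d : Derivation ℤ R R)
    (f : MvPolynomial (Fin g) R) (m : Fin g →₀ ℕ) :
    coeff m (coeffwise d f) = d (coeff m f) := by
  classical
  unfold coeffwise
  simp only [coeff_sum, coeff_monomial, Finset.sum_ite_eq']
  split_ifs with h
  · rfl
  · rw [notMem_support_iff.mp h, map_zero]

theorem cw_add {R : Type*} [CommRing R] {g : ℕ} (d : Derivation ℤ R R)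
    (p q : MvPolynomial (Fin g) R) :
    coeffwise d (p + q) = coeffwise d p + coeffwise d q := by
  ext m; simp [cw_coeff]

theorem cw_sub {R : Type*} [CommRing R] {g : ℕ} (d : Derivation ℤ R R)
    (p q : MvPolynomial (Fin g) R) :
    coeffwise d (p - q) = coeffwise d p - coeffwise d q := by
  ext m; simp [cw_coeff]

theorem cw_C_mul {R : Type*} [CommRing R] {g : ℕ} (d : Derivation ℤ R R)
    (a : R) (ha : d a = 0) (p : MvPolynomial (Fin g) R) :
    coeffwise d (C a * p) = C a * coeffwise d p := by
  ext m; simp [cw_coeff, ha]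

theorem cw_X_mul {R : Type*} [CommRing R] {g : ℕ} (d : Derivation ℤ R R)
    (i : Fin g) (p : MvPolynomial (Fin g) R) :
    coeffwise d (X i * p) = X i * coeffwise d p := by
  classical
  ext m
  simp only [cw_coeff, coeff_X_mul']
  split_ifs <;> simp [cw_coeff]

theorem cw_monomial {R : Type*} [CommRing R] {g : ℕ} (d : Derivation ℤ R R)
    (m : Fin g →₀ ℕ) (a : R) :
    coeffwise d (monomial m a) = monomial m (d a) := by
  classical
  ext k
  simp only [cw_coeff, coeff_monomial]
  split_ifs <;> simp

theorem cw_pderiv {R : Type*} [CommRing R] {g : ℕ} (d : Derivation ℤ R R)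
    (i : Fin g) (p : MvPolynomial (Fin g) R) :
    coeffwise d (pderiv i p) = pderiv i (coeffwise d p) := by
  induction p using MvPolynomial.induction_on' with
  | monomial m a => simp [cw_monomial, pderiv_monomial, mul_comm]
  | add p q hp hq => simp [cw_add, hp, hq]

theorem pd_comm {R : Type*} [CommRing R] {g : ℕ} 
    (i j : Fin g) (p : MvPolynomial (Fin g) R) :
    pderiv i (pderiv j p) = pderiv j (pderiv i p) := by
  have h : ⁅(pderiv i : Derivation R (MvPolynomial (Fin g) R) (MvPolynomial (Fin g) R)),
      (pderiv j : Derivation R (MvPolynomial (Fin g) R) (MvPolynomial (Fin g) R))⁆ = 0 := by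
    classical
    apply MvPolynomial.derivation_ext
    intro k
    simp only [Derivation.commutator_apply, pderiv_X, Pi.single_apply, Derivation.zero_apply]
    split_ifs <;> simp
  have h2 := congrArg (fun D => D p) h
  simp only [Derivation.commutator_apply, Derivation.zero_apply] at h2
  exact sub_eq_zero.mp h2

/-- The partial Gauss–Manin connections commute: if the derivations `d_σ` pairwise
commute and kill the constants `c` and `u_τ`, then `D_σ ∘ D_τ = D_τ ∘ D_σ`. -/
theorem stmt_1 {R : Type*} [CommRing R] (g : ℕ) (hg : 1 ≤ g)
    (d : Fin g → Derivation ℤ R R)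
    (hcomm : ∀ σ τ : Fin g, ∀ x : R, d σ (d τ x) = d τ (d σ x))
    (c : R) (u : Fin g → R)
    (hc : ∀ σ, d σ c = 0) (hu : ∀ σ τ, d σ (u τ) = 0)
    (σ τ : Fin g) (f : MvPolynomial (Fin g) R) :
    GMop d c u σ (GMop d c u τ f) = GMop d c u τ (GMop d c u σ f) := by
  by_cases hst : σ = τ
  · rw [hst]
  have e1 : pderiv σ (X τ : MvPolynomial (Fin g) R) = 0 := pderiv_X_of_ne (Ne.symm hst)
  have e2 : pderiv τ (X σ : MvPolynomial (Fin g) R) = 0 := pderiv_X_of_ne hst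
  have hcw : coeffwise (d σ) (coeffwise (d τ) f) = coeffwise (d τ) (coeffwise (d σ) f) := by
    ext m; simp only [cw_coeff, hcomm]
  unfold GMop
  simp only [cw_add, cw_sub, mul_assoc, pow_two, cw_C_mul _ _ (hc _), cw_C_mul _ _ (hu _ _),
    cw_X_mul, cw_pderiv, map_add, map_sub, Derivation.leibniz, smul_eq_mul, pderiv_C, e1, e2,
    hcw, pd_comm σ τ]
  ring
end

section
/- Let R be a commutative ring, d : R → R a derivation, and c, u ∈ R elements with d(c) = 0 and d(u) = 0. For each integer m ≥ 0 define the additive operator D_m on the polynomial ring R[X] by D_m(f) = d^*(f) + c·(u + 2m)·X·f − c·X²·f′, where d^* applies d to each coefficient of f (equivalently, D_m(a·X^s) = d(a)·X^s + c·(u + 2m − s)·a·X^{s+1}). Then for every integer N ≥ 1, every a ∈ R and every i ≥ 0: (D_{N−1} ∘ ⋯ ∘ D_1 ∘ D_0)(a·X^i) = Σ_{j=0}^{N} c^j · binom(N, j) · (∏_{l=0}^{j−1} (u − i + N − 1 − l)) · d^{N−j}(a) · X^{i+j}, where the integers i, N−1−l are interpreted in R via the canonical ring map from ℤ. -/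
open Polynomial

/-- The `q`-expansion model of the partial Gauss–Manin connection from weight
`k + 2mσ` to weight `k + 2(m+1)σ`:
`D_m(f) = d^*(f) + c·(u + 2m)·X·f − c·X²·f′`, where `d^*` applies the derivation
`d` to each coefficient. -/
noncomputable def Dop {R : Type*} [CommRing R] (d : Derivation ℤ R R) (c u : R) (m : ℕ)
    (f : R[X]) : R[X] :=
  (f.sum fun n a => C (d a) * X ^ n) + C (c * (u + 2 * (m : R))) * X * f
    - C c * X ^ 2 * derivative f

/-- The iterated connection `D_{N−1} ∘ ⋯ ∘ D_1 ∘ D_0`. -/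
noncomputable def DopIter {R : Type*} [CommRing R] (d : Derivation ℤ R R) (c u : R) :
    ℕ → R[X] → R[X]
  | 0 => id
  | (N + 1) => Dop d c u N ∘ DopIter d c u N

theorem Dop_add_aux {R : Type*} [CommRing R] (d : Derivation ℤ R R) (c u : R) (m : ℕ)
    (f g : R[X]) : Dop d c u m (f + g) = Dop d c u m f + Dop d c u m g := by
  unfold Dop
  rw [Polynomial.sum_add_index f g _ (by intro n; simp) (by intro n a b; simp [add_mul])]
  simp only [derivative_add]
  ring

theorem Dop_zero_aux {R : Type*} [CommRing R] (d : Derivation ℤ R R) (c u : R) (m : ℕ) :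
    Dop d c u m 0 = 0 := by
  simp [Dop]

theorem Dop_sum_aux {R : Type*} [CommRing R] (d : Derivation ℤ R R) (c u : R) (m : ℕ)
    (s : Finset ℕ) (f : ℕ → R[X]) :
    Dop d c u m (∑ j ∈ s, f j) = ∑ j ∈ s, Dop d c u m (f j) := by
  classical
  induction s using Finset.induction_on with
  | empty => simp [Dop_zero_aux]
  | insert b s hb ih => rw [Finset.sum_insert hb, Finset.sum_insert hb, Dop_add_aux, ih]

theorem Dop_monomial_aux {R : Type*} [CommRing R] (d : Derivation ℤ R R) (c u : R) (m : ℕ)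
    (b : R) (s : ℕ) :
    Dop d c u m (C b * X ^ s) =
      C (d b) * X ^ s + C (c * (u + 2 * (m : R) - (s : R)) * b) * X ^ (s + 1) := by
  unfold Dop
  rw [Polynomial.C_mul_X_pow_eq_monomial, Polynomial.sum_monomial_index _ _ (by simp),
    Polynomial.derivative_monomial, ← Polynomial.C_mul_X_pow_eq_monomial,
    ← Polynomial.C_mul_X_pow_eq_monomial]
  cases s with
  | zero => simp; ring
  | succ s =>
    simp only [Nat.add_sub_cancel, C_mul, C_add, C_sub]
    ring

theorem d_prod_aux {R : Type*} [CommRing R] (d : Derivation ℤ R R) (c u : R)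
    (hc : d c = 0) (hu : d u = 0) (N i j : ℕ) (b : R) :
    d (c ^ j * (N.choose j : R) *
      (∏ l ∈ Finset.range j, (u - (i : R) + (N : R) - 1 - (l : R))) * b) =
    c ^ j * (N.choose j : R) *
      (∏ l ∈ Finset.range j, (u - (i : R) + (N : R) - 1 - (l : R))) * d b := by
  have hP : d (∏ l ∈ Finset.range j, (u - (i : R) + (N : R) - 1 - (l : R))) = 0 := by
    induction j with
    | zero => simp
    | succ j ih =>
      rw [Finset.prod_range_succ, Derivation.leibniz, ih]
      simp [hu]
  have hcj : d (c ^ j) = 0 := by simp [Derivation.leibniz_pow, hc]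
  simp [Derivation.leibniz, hP, hcj]

theorem coeff_aux {R : Type*} [CommRing R] (w : R) (N j : ℕ) :
    ((N + 1).choose (j + 1) : R) *
      (∏ l ∈ Finset.range (j + 1), (w + ((N + 1 : ℕ) : R) - 1 - (l : R))) =
    (N.choose (j + 1) : R) * (∏ l ∈ Finset.range (j + 1), (w + (N : R) - 1 - (l : R))) +
    (w + 2 * (N : R) - (j : R)) * (N.choose j : R) *
      (∏ l ∈ Finset.range j, (w + (N : R) - 1 - (l : R))) := by
  rw [Finset.prod_range_succ', Finset.prod_range_succ _ j]
  have h1 : ∏ l ∈ Finset.range j, (w + ((N + 1 : ℕ) : R) - 1 - ((l + 1 : ℕ) : R)) =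
      ∏ l ∈ Finset.range j, (w + (N : R) - 1 - (l : R)) := by
    apply Finset.prod_congr rfl
    intro l _
    push_cast
    ring
  rw [h1]
  have h2 : (N.choose (j + 1) : R) * ((j : R) + 1) = (N.choose j : R) * ((N : R) - (j : R)) := by
    rcases le_or_gt j N with h | h
    · rw [← Nat.cast_sub h]
      exact_mod_cast congrArg (Nat.cast : ℕ → R) (Nat.choose_succ_right_eq N j)
    · simp [Nat.choose_eq_zero_of_lt h, Nat.choose_eq_zero_of_lt (Nat.lt_succ_of_lt h)]
  rw [Nat.choose_succ_succ]
  push_cast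
  linear_combination
    (∏ l ∈ Finset.range j, (w + (N : R) - 1 - (l : R))) * h2

theorem iter_aux {R : Type*} [CommRing R] (d : Derivation ℤ R R) (c u : R)
    (hc : d c = 0) (hu : d u = 0) (N : ℕ) (a : R) (i : ℕ) :
    DopIter d c u N (C a * X ^ i) =
      ∑ j ∈ Finset.range (N + 1),
        C (c ^ j * (N.choose j : R) *
            (∏ l ∈ Finset.range j, (u - (i : R) + (N : R) - 1 - (l : R))) *
            ((fun x => d x)^[N - j] a)) * X ^ (i + j) := by
  induction N with
  | zero => simp [DopIter]
  | succ N ih =>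
    have h : DopIter d c u (N + 1) (C a * X ^ i) =
      Dop d c u N (DopIter d c u N (C a * X ^ i)) := rfl
    rw [h, ih, Dop_sum_aux]
    simp only [Dop_monomial_aux, d_prod_aux d c u hc hu]
    rw [Finset.sum_add_distrib]
    have hF : ∑ j ∈ Finset.range (N + 1), C (c ^ j * (N.choose j : R) *
            (∏ l ∈ Finset.range j, (u - (i : R) + (N : R) - 1 - (l : R))) *
            d ((fun x => d x)^[N - j] a)) * X ^ (i + j) =
        ∑ j ∈ Finset.range (N + 1 + 1), C (c ^ j * (N.choose j : R) *
            (∏ l ∈ Finset.range j, (u - (i : R) + (N : R) - 1 - (l : R))) *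
            ((fun x => d x)^[N + 1 - j] a)) * X ^ (i + j) := by
      rw [Finset.sum_range_succ _ (N + 1), Nat.choose_succ_self]
      simp only [Nat.cast_zero, mul_zero, zero_mul, C_0, add_zero]
      apply Finset.sum_congr rfl
      intro j hj
      have hj' : j ≤ N := Nat.lt_succ_iff.mp (Finset.mem_range.mp hj)
      rw [Nat.succ_sub hj', Function.iterate_succ_apply']
    rw [hF, Finset.sum_range_succ' _ (N + 1), Finset.sum_range_succ' _ (N + 1),
      add_right_comm, ← Finset.sum_add_distrib]
    congr 1
    · apply Finset.sum_congr rfl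
      intro j _
      rw [← add_assoc i j 1, ← add_mul, ← C_add, Nat.add_sub_add_right]
      congr 2
      have := coeff_aux (u - (i : R)) N j
      push_cast at this ⊢
      linear_combination (-c ^ (j + 1) * ((fun x => d x)^[N - j] a)) * this
    · simp

/-- Explicit iteration formula for the partial Gauss–Manin connection on
`q`-expansions:
`(D_{N−1} ∘ ⋯ ∘ D_0)(a·X^i) = Σ_{j=0}^{N} c^j·binom(N,j)·(∏_{l=0}^{j−1}(u−i+N−1−l))·d^{N−j}(a)·X^{i+j}`. -/
theorem stmt_2 {R : Type*} [CommRing R] (d : Derivation ℤ R R) (c u : R)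
    (hc : d c = 0) (hu : d u = 0) (N : ℕ) (hN : 1 ≤ N) (a : R) (i : ℕ) :
    DopIter d c u N (C a * X ^ i) =
      ∑ j ∈ Finset.range (N + 1),
        C (c ^ j * (N.choose j : R) *
            (∏ l ∈ Finset.range j, (u - (i : R) + (N : R) - 1 - (l : R))) *
            ((fun x => d x)^[N - j] a)) * X ^ (i + j) := by
  exact iter_aux d c u hc hu N a i
end

section
/- Let p ≥ 3 be a prime, let M be a complete normed ℚ_p-vector space whose norm is nonarchimedean (‖x+y‖ ≤ max(‖x‖,‖y‖) for all x, y), and let L : M → M and T : M → M be ℚ_p-linear maps such that ‖T(x)‖ ≤ ‖x‖ for all x ∈ M and T ∘ L = L ∘ T. Let f ≥ 1 be an integer and q = p^f. Suppose g ∈ M and C ≥ 0 satisfy ‖(L − id)^N(g)‖ ≤ C·p^{−N} for all N ≥ 0. Then: (i) the series Σ_{j≥1} ((−1)^{j−1}/j)·(L − id)^j(g) converges in M; (ii) the sequence B_m := Σ_{i=0}^{m} (1/(i!·(q−1)^i)) · T^i ( Σ_{(j₁,…,jᵢ)} (∏_{a=1}^{i} ((−1)^{j_a−1}/j_a)) ·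 (L − id)^{j₁+⋯+jᵢ}(g) ) converges in M as m → ∞, where the inner sum runs over all i-tuples of positive integers with j₁ + ⋯ + jᵢ ≤ m, and the rational scalars act via the ℚ_p-vector space structure. -/
open Filter

lemma aux_padic_nat_inv (p : ℕ) [hp : Fact p.Prime] (n k : ℕ) (hn : n ≠ 0)
    (h : 2 * padicValNat p n ≤ k) :
    ‖(n : ℚ_[p])‖⁻¹ ≤ (Real.sqrt p) ^ k := by
  have hp1 : (1 : ℝ) ≤ Real.sqrt p := by
    rw [Real.one_le_sqrt]; exact_mod_cast hp.out.one_le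
  have e : ‖(n : ℚ_[p])‖⁻¹ = (Real.sqrt p) ^ (2 * padicValNat p n) := by
    rw [pow_mul, Real.sq_sqrt (by positivity),
      Padic.norm_eq_zpow_neg_valuation (by exact_mod_cast hn), Padic.valuation_natCast]
    simp
  rw [e]
  exact pow_le_pow_right₀ hp1 h

lemma aux_val_nat (p : ℕ) [hp : Fact p.Prime] (hp3 : 3 ≤ p) (j : ℕ) (hj : 1 ≤ j) :
    2 * padicValNat p j ≤ j - 1 := by
  have h1 : p ^ padicValNat p j ≤ j := Nat.le_of_dvd hj pow_padicValNat_dvd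
  have h2 : 3 ^ padicValNat p j ≤ p ^ padicValNat p j := Nat.pow_le_pow_left hp3 _
  have h3 : ∀ v : ℕ, 2 * v + 1 ≤ 3 ^ v := by
    intro v
    induction v with
    | zero => simp
    | succ k ih => rw [pow_succ]; omega
  have := h3 (padicValNat p j)
  omega

lemma aux_val_fact (p : ℕ) [hp : Fact p.Prime] (hp3 : 3 ≤ p) (i : ℕ) :
    2 * padicValNat p i.factorial ≤ i := by
  have h := sub_one_mul_padicValNat_factorial (p := p) i
  have h2 : 2 * padicValNat p i.factorial ≤ (p - 1) * padicValNat p i.factorial :=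
    Nat.mul_le_mul_right _ (by omega)
  omega

lemma aux_coef (p : ℕ) [hp : Fact p.Prime] (hp3 : 3 ≤ p) (j : ℕ) (hj : 1 ≤ j) :
    ‖(-1 : ℚ_[p]) ^ (j - 1) / (j : ℚ_[p])‖ ≤ (Real.sqrt p) ^ (j - 1) := by
  rw [norm_div, norm_pow, norm_neg, norm_one, one_pow, one_div]
  exact aux_padic_nat_inv p j _ (by omega) (aux_val_nat p hp3 j hj)

lemma aux_q (p : ℕ) [hp : Fact p.Prime] (f : ℕ) (hf : 1 ≤ f) :
    ‖(p : ℚ_[p]) ^ f - 1‖ = 1 := by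
  have h : ‖(p : ℚ_[p]) ^ f‖ < 1 := by
    rw [norm_pow]
    exact pow_lt_one₀ (norm_nonneg _) Padic.norm_p_lt_one (by omega)
  have := IsUltrametricDist.norm_add_eq_max_of_norm_ne_norm
    (x := (p : ℚ_[p]) ^ f) (y := (-1 : ℚ_[p])) (by rw [norm_neg, norm_one]; exact h.ne)
  rw [sub_eq_add_neg, this, norm_neg, norm_one, max_eq_right h.le]

lemma aux_final (p : ℕ) [hp : Fact p.Prime] (C : ℝ) (n : ℕ) :
    (Real.sqrt p) ^ n * (C * (p : ℝ) ^ (-(n : ℤ))) = C * ((Real.sqrt p)⁻¹) ^ n := by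
  have hp0 : (0 : ℝ) < Real.sqrt p := by
    rw [Real.sqrt_pos]; exact_mod_cast hp.out.pos
  have e : (p : ℝ) = Real.sqrt p ^ 2 := (Real.sq_sqrt (by positivity)).symm
  have : (p : ℝ) ^ (-(n : ℤ)) = (Real.sqrt p ^ n)⁻¹ * (Real.sqrt p ^ n)⁻¹ := by
    rw [zpow_neg, zpow_natCast, ← mul_inv, ← mul_pow, ← sq, ← e]
  rw [this, inv_pow]
  field_simp

lemma aux_conv {M : Type*} [NormedAddCommGroup M] [CompleteSpace M] (p : ℕ) [hp : Fact p.Prime]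
    (C : ℝ) (F : ℕ → M)
    (h : ∀ m, ‖F (m + 1) - F m‖ ≤ C * ((Real.sqrt p)⁻¹) ^ (m + 1)) :
    ∃ A, Tendsto F atTop (nhds A) := by
  apply cauchySeq_tendsto_of_complete
  apply cauchySeq_of_le_geometric (Real.sqrt p)⁻¹ (C * (Real.sqrt p)⁻¹)
  · apply inv_lt_one_of_one_lt₀
    rw [Real.lt_sqrt (by norm_num)]
    have := hp.out.one_lt
    norm_num
    exact this
  · intro n
    rw [dist_comm, dist_eq_norm]
    refine (h n).trans (le_of_eq ?_)
    ring

/-- Analytic core of the `p`-adic iteration of the Gauss–Manin connection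
(Proposition 4.2): given a nonarchimedean complete normed `ℚ_p`-vector space `M`,
commuting operators `L` (a power of a partial Gauss–Manin connection) and `T`
(norm-nonincreasing, multiplication by the weight parameter), and `g ∈ M` with
`‖(L − id)^N g‖ ≤ C·p^{−N}` for all `N`, both the logarithm series
`Σ_{j≥1} ((−1)^{j−1}/j)·(L − id)^j(g)` and the exponential double series `B_m`
defining `∇(σ)^{s_σ}(g)` converge in `M`. -/
theorem stmt_3 (p : ℕ) [Fact p.Prime] (hp3 : 3 ≤ p)
    {M : Type*} [NormedAddCommGroup M] [NormedSpace ℚ_[p] M] [CompleteSpace M]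
    (hna : ∀ x y : M, ‖x + y‖ ≤ max ‖x‖ ‖y‖)
    (L T : Module.End ℚ_[p] M)
    (hT : ∀ x : M, ‖T x‖ ≤ ‖x‖)
    (hcomm : T * L = L * T)
    (f : ℕ) (hf : 1 ≤ f)
    (g : M) (C : ℝ) (hC : 0 ≤ C)
    (hbound : ∀ N : ℕ, ‖((L - 1) ^ N) g‖ ≤ C * (p : ℝ) ^ (-(N : ℤ))) :
    (∃ A : M, Tendsto
        (fun m : ℕ => ∑ j ∈ Finset.Icc 1 m,
          (((-1 : ℚ_[p]) ^ (j - 1) / (j : ℚ_[p])) • ((L - 1) ^ j) g))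
        atTop (nhds A)) ∧
    (∃ B : M, Tendsto
        (fun m : ℕ => ∑ i ∈ Finset.range (m + 1),
          ((1 : ℚ_[p]) / ((i.factorial : ℚ_[p]) * ((p : ℚ_[p]) ^ f - 1) ^ i)) •
            (T ^ i)
              (∑ J ∈ (Fintype.piFinset fun _ : Fin i => Finset.Icc 1 m).filter
                  (fun J => ∑ a, J a ≤ m),
                (∏ a, ((-1 : ℚ_[p]) ^ (J a - 1) / (J a : ℚ_[p]))) •
                  ((L - 1) ^ (∑ a, J a)) g))
        atTop (nhds B)) := by
  haveI : IsUltrametricDist M :=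
    IsUltrametricDist.isUltrametricDist_of_forall_norm_add_le_max_norm hna
  have hp1 : (1 : ℝ) ≤ Real.sqrt p := by
    rw [Real.one_le_sqrt]; exact_mod_cast (Fact.out : p.Prime).one_le
  have hr0 : (0 : ℝ) ≤ (Real.sqrt p)⁻¹ := by positivity
  refine ⟨aux_conv p C _ ?_, aux_conv p C _ ?_⟩
  · intro m
    rw [Finset.sum_Icc_succ_top (by omega), add_sub_cancel_left, norm_smul, ← aux_final]
    refine mul_le_mul ((aux_coef p hp3 (m + 1) (by omega)).trans
      (pow_le_pow_right₀ hp1 (by omega))) (hbound _) (norm_nonneg _) (by positivity)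
  · intro m
    have hTi : ∀ (i : ℕ) (x : M), ‖(T ^ i) x‖ ≤ ‖x‖ := by
      intro i
      induction i with
      | zero => intro x; simp
      | succ k ih =>
        intro x
        rw [pow_succ, Module.End.mul_apply]
        exact (ih _).trans (hT x)
    have hc : ∀ i : ℕ, ‖(1 : ℚ_[p]) / ((i.factorial : ℚ_[p]) * ((p : ℚ_[p]) ^ f - 1) ^ i)‖
        ≤ (Real.sqrt p) ^ i := by
      intro i
      rw [norm_div, norm_mul, norm_pow, aux_q p f hf, norm_one, one_pow, mul_one, one_div]
      exact aux_padic_nat_inv p _ _ (Nat.factorial_ne_zero i) (aux_val_fact p hp3 i)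
    -- the tuple set
    set S : (i : ℕ) → ℕ → Finset (Fin i → ℕ) := fun i m =>
      (Fintype.piFinset fun _ : Fin i => Finset.Icc 1 m).filter (fun J => ∑ a, J a ≤ m) with hS
    have hmem : ∀ i n (J : Fin i → ℕ), J ∈ S i n ↔ (∀ a, 1 ≤ J a) ∧ ∑ a, J a ≤ n := by
      intro i n J
      simp only [hS, Finset.mem_filter, Fintype.mem_piFinset, Finset.mem_Icc]
      constructor
      · rintro ⟨h1, h2⟩
        exact ⟨fun a => (h1 a).1, h2⟩
      · rintro ⟨h1, h2⟩
        exact ⟨fun a => ⟨h1 a, (Finset.single_le_sum (f := J) (fun _ _ => Nat.zero_le _)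
          (Finset.mem_univ a)).trans h2⟩, h2⟩
    have hsub : ∀ i, S i m ⊆ S i (m + 1) := by
      intro i J hJ
      rw [hmem] at hJ ⊢
      exact ⟨hJ.1, by omega⟩
    have hempty : S (m + 1) m = ∅ := by
      rw [Finset.eq_empty_iff_forall_notMem]
      intro J hJ
      rw [hmem] at hJ
      have : ∑ a : Fin (m + 1), 1 ≤ ∑ a, J a := Finset.sum_le_sum fun a _ => hJ.1 a
      simp at this
      omega
    set t : (i : ℕ) → (Fin i → ℕ) → M := fun i J =>
      (∏ a, ((-1 : ℚ_[p]) ^ (J a - 1) / (J a : ℚ_[p]))) • ((L - 1) ^ (∑ a, J a)) g with ht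
    set c : ℕ → ℚ_[p] := fun i =>
      (1 : ℚ_[p]) / ((i.factorial : ℚ_[p]) * ((p : ℚ_[p]) ^ f - 1) ^ i) with hcdef
    change ‖∑ i ∈ Finset.range (m + 1 + 1), c i • (T ^ i) (∑ J ∈ S i (m + 1), t i J)
      - ∑ i ∈ Finset.range (m + 1), c i • (T ^ i) (∑ J ∈ S i m, t i J)‖ ≤ _
    have e : ∑ i ∈ Finset.range (m + 1), c i • (T ^ i) (∑ J ∈ S i m, t i J)
        = ∑ i ∈ Finset.range (m + 1 + 1), c i • (T ^ i) (∑ J ∈ S i m, t i J) := by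
      rw [Finset.sum_range_succ _ (m + 1), hempty]
      simp
    rw [e, ← Finset.sum_sub_distrib]
    have hB : 0 ≤ C * (Real.sqrt p)⁻¹ ^ (m + 1) := by positivity
    apply IsUltrametricDist.norm_sum_le_of_forall_le_of_nonneg hB
    intro i _
    rw [← smul_sub, ← map_sub, ← Finset.sum_sdiff (hsub i), add_sub_cancel_right, map_sum,
      Finset.smul_sum]
    apply IsUltrametricDist.norm_sum_le_of_forall_le_of_nonneg hB
    intro J hJ
    rw [Finset.mem_sdiff, hmem, hmem] at hJ
    obtain ⟨⟨hJ1, hJ2⟩, hJ3⟩ := hJ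
    have hsum : ∑ a, J a = m + 1 := by
      by_contra hne
      exact hJ3 ⟨hJ1, by omega⟩
    have hprod : ‖∏ a, ((-1 : ℚ_[p]) ^ (J a - 1) / (J a : ℚ_[p]))‖
        ≤ ∏ a, (Real.sqrt p) ^ (J a - 1) := by
      rw [norm_prod]
      exact Finset.prod_le_prod (fun _ _ => norm_nonneg _)
        (fun a _ => aux_coef p hp3 (J a) (hJ1 a))
    have hpow : (Real.sqrt p) ^ i * ∏ a, (Real.sqrt p) ^ (J a - 1) = (Real.sqrt p) ^ (m + 1) := by
      rw [Finset.prod_pow_eq_pow_sum, ← pow_add, ← hsum]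
      congr 1
      have : ∑ a, J a = ∑ a, (1 + (J a - 1)) :=
        Finset.sum_congr rfl fun a _ => by have := hJ1 a; omega
      rw [this, Finset.sum_add_distrib]
      simp
    have hb := hbound (m + 1)
    rw [← aux_final, ← hpow, norm_smul, mul_assoc]
    refine mul_le_mul (hc i) ((hTi i _).trans ?_) (norm_nonneg _) (by positivity)
    simp only [ht]
    rw [norm_smul, hsum]
    exact mul_le_mul hprod hb (norm_nonneg _) (by positivity)
end

section
/- Let R be a commutative ring, let g ≥ 1 and d ≥ 1 be integers, and let u₁,…,u_g ∈ R. In the polynomial ring R[X₁,…,X_g], let S be the R-submodule spanned by all elements (u_j − I_j)·X^I·X_j, where j ranges over {1,…,g} and I ranges over multi-indices of total degree d − 1 (here I_j denotes the j-th entry of I, viewed in R via the canonical map from ℕ). Then for every multi-index I′ of total degree d, the element (∏_{j=1}^{g} ∏_{i=0}^{d−1} (u_j − i)) · X^{I′} lies in S. -/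
open MvPolynomial

/-- Key algebraic step behind the overconvergent projection (Lemma 6.19): in
`R[X₁,…,X_g]`, let `S` be the `R`-submodule spanned by the elements
`(u_j − I_j)·X^I·X_j` for `j ∈ {1,…,g}` and multi-indices `I` of total degree
`d − 1`. Then for every multi-index `I′` of total degree `d`, the element
`(∏_j ∏_{i=0}^{d−1} (u_j − i))·X^{I′}` lies in `S`. -/
theorem stmt_4 {R : Type*} [CommRing R] (g d : ℕ) (hg : 1 ≤ g) (hd : 1 ≤ d)
    (u : Fin g → R)
    (S : Set (MvPolynomial (Fin g) R))
    (hS : S = {f | ∃ (j : Fin g) (I : Fin g →₀ ℕ),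
      (I.sum fun _ n => n) = d - 1 ∧
      f = C (u j - (I j : R)) * monomial I 1 * X j})
    (I' : Fin g →₀ ℕ) (hI' : (I'.sum fun _ n => n) = d) :
    C (∏ j, ∏ i ∈ Finset.range d, (u j - (i : R))) * monomial I' 1 ∈
      Submodule.span R S := by
  have hne : ∃ j, I' j ≠ 0 := by
    by_contra! h
    have : I' = 0 := Finsupp.ext h
    subst this
    simp at hI'
    omega
  obtain ⟨j, hj⟩ := hne
  obtain ⟨I, rfl⟩ : ∃ I : Fin g →₀ ℕ, I' = I + Finsupp.single j 1 := by
    refine ⟨I' - Finsupp.single j 1, (tsub_add_cancel_of_le ?_).symm⟩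
    rw [Finsupp.single_le_iff]
    omega
  rw [Finsupp.sum_add_index' (fun _ => rfl) (fun _ _ _ => rfl),
    Finsupp.sum_single_index rfl] at hI'
  have hlt : I j < d := by
    have h : I j ≤ I.sum fun _ n => n := by
      rw [Finsupp.sum_fintype _ _ (fun _ => rfl)]
      exact Finset.single_le_sum (f := fun k => I k) (fun _ _ => Nat.zero_le _)
        (Finset.mem_univ j)
    omega
  have hdvd : (u j - (I j : R)) ∣ ∏ j, ∏ i ∈ Finset.range d, (u j - (i : R)) :=
    (Finset.dvd_prod_of_mem (fun i : ℕ => u j - (i : R)) (Finset.mem_range.2 hlt)).trans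
      (Finset.dvd_prod_of_mem (fun j => ∏ i ∈ Finset.range d, (u j - (i : R)))
        (Finset.mem_univ j))
  obtain ⟨c, hc⟩ := hdvd
  have hmem : C (u j - (I j : R)) * monomial I 1 * X j ∈ Submodule.span R S := by
    apply Submodule.subset_span
    rw [hS]
    exact ⟨j, I, by omega, rfl⟩
  have hmon : (monomial (I + Finsupp.single j 1) 1 : MvPolynomial (Fin g) R)
      = monomial I 1 * X j := by
    rw [X, monomial_mul, one_mul]
  have := Submodule.smul_mem _ c hmem
  rw [smul_eq_C_mul] at this
  rw [hc, hmon, C_mul]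
  convert this using 1
  ring
end
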